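/- Let c ∈ (0,1] and define f(t) = (2·arcsin(c·sin(t/2)))² for t ∈ [0,π]. Let (L_N)_{N≥1} be a sequence of odd positive integers with L_N → ∞ and L_N/N → 0 as N → ∞. Then lim_{N→∞} (2N²/L_N³) · Σ_{m=1}^{(L_N−1)/2} f(2πm/N) = c²π²/3. Consequently, the cost Φ(L_N) = 2 Σ_{m=1}^{(L_N−1)/2} f(2πm/N) of a centered block of L_N consecutive points on a latitude circle of effective radius c = cos φ satisfies Φ(L_N) ∼ c²π²L_N³/(3N²). -/

import Mathlib

open Real Filter

/-- Squared geodesic distance along a latitude circle of effective radius `c = cos φ`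
with longitudinal separation `t`: `f(t) = (2·arcsin(c·sin(t/2)))²`. -/
noncomputable def ringCost (c t : ℝ) : ℝ := (2 * Real.arcsin (c * Real.sin (t / 2))) ^ 2

/-!
Near `t = 0` the squared distance satisfies `ringCost c t = c² t² + o(t²)`, because
`t ↦ 2 arcsin (c sin (t / 2))` vanishes at `0` with derivative `c`. All separations occurring in
the block are at most `π L_N / N → 0`, so up to a relatively negligible error the cost sum is
`c²` times the sum of squared separations (`sum_sq_sep`); multiplied by `2 N² / L_N³`, the latter
equals `π² / 3 * (1 - 1 / L_N²)`.
-/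

lemma ringCost_isLittleO (c : ℝ) :
    (fun t => ringCost c t - c ^ 2 * t ^ 2) =o[nhds 0] fun t : ℝ => t ^ 2 := by
  have hd : HasDerivAt (fun t : ℝ => 2 * Real.arcsin (c * Real.sin (t / 2))) c 0 := by
    have h1 : HasDerivAt (fun t : ℝ => c * Real.sin (t / 2)) (c * (1 / 2)) 0 := by
      have h := (((hasDerivAt_id (0 : ℝ)).div_const 2).sin).const_mul c
      simpa using h
    have h2 : HasDerivAt Real.arcsin 1 (c * Real.sin ((0 : ℝ) / 2)) := by
      have h := Real.hasDerivAt_arcsin (x := 0) (by norm_num) (by norm_num)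
      simpa using h
    have h3 := (h2.comp (0 : ℝ) h1).const_mul 2
    exact h3.congr_deriv (by ring)
  have hlo : (fun t : ℝ => 2 * Real.arcsin (c * Real.sin (t / 2)) - c * t)
      =o[nhds 0] fun t : ℝ => t := by
    have h := hd.isLittleO
    simpa [mul_comm c] using h
  have hbig : (fun t : ℝ => 2 * Real.arcsin (c * Real.sin (t / 2)) + c * t)
      =O[nhds 0] fun t : ℝ => t := by
    have h := hlo.isBigO.add ((Asymptotics.isBigO_refl (fun t : ℝ => t) (nhds 0)).const_mul_left
      (2 * c))
    refine h.congr_left fun t => ?_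
    ring
  refine (hlo.mul_isBigO hbig).congr (fun t => ?_) (fun t => ?_)
  · unfold ringCost
    ring
  · ring

/-- The sum of squares formula, rewritten in terms of the block length `2 * K + 1`. -/
lemma sum_sq_sep (K : ℕ) (x : ℝ) :
    ∑ m ∈ Finset.range K, (2 * π * ((m : ℝ) + 1) / x) ^ 2 =
      π ^ 2 * (2 * (K : ℝ) + 1) * ((2 * (K : ℝ) + 1) ^ 2 - 1) / (6 * x ^ 2) := by
  induction K with
  | zero => simp
  | succ k ih =>
    rw [Finset.sum_range_succ, ih]
    rcases eq_or_ne x 0 with rfl | hx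
    · simp
    · push_cast
      field_simp
      ring

/-- asymptotics of the block cost. For odd block lengths `L_N → ∞` with
`L_N/N → 0`, one has `(2N²/L_N³)·Σ_{m=1}^{(L_N−1)/2} f(2πm/N) → c²π²/3`; consequently
`Φ(L_N) = 2 Σ_{m=1}^{(L_N−1)/2} f(2πm/N) ∼ c²π² L_N³/(3N²)`. -/
theorem block_cost_asymptotics
    (c : ℝ) (hc : c ∈ Set.Ioc (0 : ℝ) 1)
    (L : ℕ → ℕ) (hodd : ∀ N, Odd (L N)) (hpos : ∀ N, 0 < L N)
    (hLtop : Tendsto (fun N => L N) atTop atTop)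
    (hratio : Tendsto (fun N => (L N : ℝ) / N) atTop (nhds 0)) :
    Tendsto
      (fun N : ℕ => (2 * (N : ℝ) ^ 2 / (L N : ℝ) ^ 3) *
        ∑ m ∈ Finset.range ((L N - 1) / 2), ringCost c (2 * π * (m + 1) / N))
      atTop (nhds (c ^ 2 * π ^ 2 / 3)) ∧
    Tendsto
      (fun N : ℕ => (2 * ∑ m ∈ Finset.range ((L N - 1) / 2), ringCost c (2 * π * (m + 1) / N)) /
        (c ^ 2 * π ^ 2 * (L N : ℝ) ^ 3 / (3 * (N : ℝ) ^ 2)))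
      atTop (nhds 1) := by
  have hLr : Tendsto (fun N => (L N : ℝ)) atTop atTop := tendsto_natCast_atTop_atTop.comp hLtop
  have hK : ∀ N, (L N : ℝ) = 2 * (((L N - 1) / 2 : ℕ) : ℝ) + 1 := by
    intro N
    obtain ⟨k, hk⟩ := hodd N
    have h : L N = 2 * ((L N - 1) / 2) + 1 := by omega
    exact_mod_cast h
  have hLpos : ∀ N, (0 : ℝ) < L N := fun N => by exact_mod_cast hpos N
  set Q : ℕ → ℝ := fun N =>
    ∑ m ∈ Finset.range ((L N - 1) / 2), (2 * π * ((m : ℝ) + 1) / N) ^ 2 with hQ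
  set S : ℕ → ℝ := fun N =>
    ∑ m ∈ Finset.range ((L N - 1) / 2), ringCost c (2 * π * (m + 1) / N) with hS
  set A : ℕ → ℝ := fun N => 2 * (N : ℝ) ^ 2 / (L N : ℝ) ^ 3 with hA
  have hAQ : ∀ᶠ N in atTop, π ^ 2 / 3 * (1 - ((L N : ℝ)⁻¹) ^ 2) = A N * Q N := by
    filter_upwards [eventually_gt_atTop 0] with N hN
    have hN' : (N : ℝ) ≠ 0 := by exact_mod_cast hN.ne'
    have hL' := (hLpos N).ne'
    simp only [hA, hQ]
    rw [sum_sq_sep, ← hK N]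
    field_simp
    ring
  have hAQlim : Tendsto (fun N => A N * Q N) atTop (nhds (π ^ 2 / 3)) := by
    refine Tendsto.congr' hAQ ?_
    have h := (((tendsto_inv_atTop_zero.comp hLr).pow 2).const_sub 1).const_mul (π ^ 2 / 3)
    simpa using h
  have hsmall : (fun N => S N - c ^ 2 * Q N) =o[atTop] Q := by
    rw [Asymptotics.isLittleO_iff]
    intro ε hε
    obtain ⟨δ, hδ, hb⟩ := Metric.eventually_nhds_iff.1
      ((Asymptotics.isLittleO_iff.1 (ringCost_isLittleO c)) hε)
    have hr : ∀ᶠ N : ℕ in atTop, π * ((L N : ℝ) / N) < δ := by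
      have h := hratio.const_mul π
      rw [mul_zero] at h
      exact h.eventually (gt_mem_nhds hδ)
    filter_upwards [hr, eventually_gt_atTop 0] with N hN hN0
    have hN' : (0 : ℝ) < N := by exact_mod_cast hN0
    have hQnn : 0 ≤ Q N := Finset.sum_nonneg fun m _ => sq_nonneg _
    rw [Real.norm_of_nonneg hQnn]
    simp only [hS, hQ]
    rw [Finset.mul_sum, Finset.mul_sum, ← Finset.sum_sub_distrib]
    refine norm_sum_le_of_le _ fun m hm => ?_
    have hm' : (m : ℝ) + 1 ≤ (((L N - 1) / 2 : ℕ) : ℝ) := by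
      exact_mod_cast Finset.mem_range.1 hm
    -- each separation is at most `π L_N / N`, hence within the radius `δ`
    have hle : 2 * π * ((m : ℝ) + 1) / N ≤ π * ((L N : ℝ) / N) := by
      rw [← mul_div_assoc]
      apply div_le_div_of_nonneg_right _ hN'.le
      have h2 : 2 * ((m : ℝ) + 1) ≤ L N := by rw [hK N]; linarith
      calc 2 * π * ((m : ℝ) + 1) = π * (2 * ((m : ℝ) + 1)) := by ring
        _ ≤ π * L N := mul_le_mul_of_nonneg_left h2 pi_pos.le
    have hnn : 0 ≤ 2 * π * ((m : ℝ) + 1) / N := by positivity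
    have h := @hb (2 * π * ((m : ℝ) + 1) / N) (by
      rw [Real.dist_eq, sub_zero, abs_of_nonneg hnn]
      exact hle.trans_lt hN)
    rwa [Real.norm_of_nonneg (sq_nonneg (2 * π * ((m : ℝ) + 1) / N))] at h
  have herr : Tendsto (fun N => A N * (S N - c ^ 2 * Q N)) atTop (nhds 0) :=
    (Asymptotics.isLittleO_one_iff ℝ).1
      (((Asymptotics.isBigO_refl A atTop).mul_isLittleO hsmall).trans_isBigO
        (hAQlim.isBigO_one ℝ))
  have hfirst : Tendsto (fun N => A N * S N) atTop (nhds (c ^ 2 * π ^ 2 / 3)) := by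
    have h := (hAQlim.const_mul (c ^ 2)).add herr
    rw [show c ^ 2 * (π ^ 2 / 3) + 0 = c ^ 2 * π ^ 2 / 3 by ring] at h
    exact h.congr fun N => by ring
  refine ⟨hfirst, ?_⟩
  have hc0 : c ≠ 0 := hc.1.ne'
  have hpi : π ≠ 0 := pi_ne_zero
  have h := hfirst.div_const (c ^ 2 * π ^ 2 / 3)
  rw [div_self (by positivity)] at h
  refine h.congr' ?_
  filter_upwards [eventually_gt_atTop 0] with N hN
  have hN' : (N : ℝ) ≠ 0 := by exact_mod_cast hN.ne'
  have hL' := (hLpos N).ne'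
  simp only [hA]
  field_simp
  simp only [hS]
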